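/- arXiv:2409.13680 — 2 statements merged into one kernel-verified Lean document; each statement's English description precedes it below -/
import Mathlib

section
/- Let G be a k-connected (k ≥ 2) finite simple graph with n ≥ 3 vertices, e edges, minimum degree δ ≥ 1, and maximum degree Δ. If Inv(G) ≤ (n − k − 1)/Δ + (1/((k + 1)·Δ³))·( 2(k + 1)·((k + 1)·δ² + e²/(n − k − 1)) − e² − 2(k + 1)·(n − k − 1)·Δ² ), then G is Hamiltonian. -/
open Finset

/-- The first Zagreb index of a graph: the sum of the squares of the vertex degrees. -/
def zagreb1 {V : Type*} [Fintype V] (G : SimpleGraph V) [DecidableRel G.Adj] : ℝ :=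
  ∑ u, (G.degree u : ℝ) ^ 2

/-- The forgotten topological index of a graph: the sum of the cubes of the vertex degrees. -/
def forgottenIndex {V : Type*} [Fintype V] (G : SimpleGraph V) [DecidableRel G.Adj] : ℝ :=
  ∑ u, (G.degree u : ℝ) ^ 3

/-- The inverse degree of a graph: the sum of the reciprocals of the vertex degrees. -/
noncomputable def invDegree {V : Type*} [Fintype V] (G : SimpleGraph V) [DecidableRel G.Adj] : ℝ :=
  ∑ u, 1 / (G.degree u : ℝ)

/-- The independence number of a graph: the largest cardinality of a set of pairwise
nonadjacent vertices. -/
noncomputable def indepNum {V : Type*} [Fintype V] (G : SimpleGraph V) : ℕ :=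
  sSup {k | ∃ s : Finset V, s.card = k ∧ ∀ u ∈ s, ∀ v ∈ s, ¬ G.Adj u v}

/-- A graph is a regular balanced bipartite graph if its vertices can be partitioned into
two parts of equal size with every edge joining the two parts, and all vertices have the
same degree. -/
def IsRegularBalancedBipartite {V : Type*} [Fintype V] (G : SimpleGraph V) [DecidableRel G.Adj] : Prop :=
  ∃ (A : Finset V) (r : ℕ), 2 * A.card = Fintype.card V ∧
    (∀ u v, G.Adj u v → (u ∈ A ↔ v ∉ A)) ∧ G.IsRegularOfDegree r

/-- A graph is `k`-connected if it has more than `k` vertices and removing any set of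
fewer than `k` vertices leaves a connected graph. -/
def IsKConnected {V : Type*} [Fintype V] (G : SimpleGraph V) (k : ℕ) : Prop :=
  k < Fintype.card V ∧
    ∀ S : Finset V, S.card < k → (G.induce (↑S : Set V)ᶜ).Connected

/-- A graph is traceable if it has a Hamiltonian path. -/
def IsTraceable {V : Type*} [DecidableEq V] (G : SimpleGraph V) : Prop :=
  ∃ (u v : V) (p : G.Walk u v), p.IsHamiltonian

/-!
Suppose that `G` is not Hamiltonian. A longest cycle misses a vertex `v`, and the successors along
it of the vertices attached to the component of `v` form, together with `v`, an independent set,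
since an edge between two of them would give a longer cycle. By connectivity this yields an
independent set `A` of `k + 1` vertices (Chvátal–Erdős).

Counting edges at `A` and at its complement gives `(k + 1) δ ≤ e ≤ (n - k - 1) Δ`, and
`Inv(G) ≥ n / Δ`. Together with the assumed upper bound on `Inv(G)` these estimates leave no slack,
so every edge joins `A` to its complement and `n - k - 1 = k + 1`.

In a balanced bipartite graph, an edge joining two vertices in different parts whose degree sum
exceeds the size of a part can be removed from a spanning cycle by a crossing exchange, so if every
nonadjacent such pair has that degree sum, Hamiltonicity follows from that of the complete bipartite
graph (Moon–Moser). Here all degrees are at least `k` and `2k > k + 1`, a contradiction.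
-/

section Cycles

variable {V : Type*}

theorem cycle_chain_coe_iff {r : V → V → Prop} {l : List V} {a b : V} (ha : l.head? = some a)
    (hb : l.getLast? = some b) : (l : Cycle V).Chain r ↔ l.IsChain r ∧ r b a := by
  obtain ⟨t, rfl⟩ := List.head?_eq_some_iff.1 ha
  rw [Cycle.chain_coe_cons, ← List.cons_append, List.isChain_append]
  simp [hb]

theorem exists_coe_eq_and_getLast?_eq_of_mem [DecidableEq V] {c : Cycle V} (hc : c.Nodup)
    {x : V} (hx : x ∈ c) :
    ∃ l : List V, (l : Cycle V) = c ∧ l.head? = some (c.formPerm hc x) ∧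
      l.getLast? = some x := by
  induction c using Quotient.inductionOn' with | h l
  obtain ⟨s, t, rfl⟩ := List.append_of_mem hx
  have hrot : (t ++ (s ++ [x])) ~r (s ++ x :: t) := by
    simpa using List.isRotated_append (l := t) (l' := s ++ [x])
  refine ⟨t ++ (s ++ [x]), Cycle.coe_eq_coe.2 hrot, ?_, by simp⟩
  have hperm := List.formPerm_eq_of_isRotated (hrot.nodup_iff.2 hc) hrot
  change _ = some ((s ++ x :: t).formPerm x)
  rw [← hperm, ← List.append_assoc]
  cases t ++ s <;> simp

theorem exists_coe_append_eq_and_getLast?_eq_of_mem [DecidableEq V] {c : Cycle V} (hc : c.Nodup)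
    {x y : V} (hx : x ∈ c) (hy : y ∈ c) (hxy : x ≠ y) :
    ∃ l₁ l₂ : List V, ((l₁ ++ l₂ : List V) : Cycle V) = c ∧
      (l₁.head? = some (c.formPerm hc x) ∧ l₁.getLast? = some y) ∧
      l₂.head? = some (c.formPerm hc y) ∧ l₂.getLast? = some x := by
  obtain ⟨l, rfl, hhead, hlast⟩ := exists_coe_eq_and_getLast?_eq_of_mem hc hx
  obtain ⟨t, rfl⟩ := List.getLast?_eq_some_iff.1 hlast
  have hyt : y ∈ t := by simpa [hxy.symm] using hy
  obtain ⟨s, u, rfl⟩ := List.append_of_mem hyt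
  refine ⟨s ++ [y], u ++ [x], by simp, ⟨?_, by simp⟩, ?_, by simp⟩
  · rw [← hhead]
    cases s <;> simp
  · have hnext := List.formPerm_apply_lt_getElem _ hc s.length (by simp)
    change _ = some ((s ++ y :: u ++ [x]).formPerm y)
    cases u <;> simpa using hnext.symm

end Cycles

section PathsAndCycles

variable {V : Type*} {G : SimpleGraph V}

/-- The list `l` enumerates the vertices of a path of `G` from `a` to `b`. Lists are used rather
than walks because paths are cut and reassembled by list concatenation and reversal. -/
structure IsPathList (G : SimpleGraph V) (a b : V) (l : List V) : Prop where
  nodup : l.Nodup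
  isChain : l.IsChain G.Adj
  head?_eq : l.head? = some a
  getLast?_eq : l.getLast? = some b

namespace IsPathList

variable {a b c d : V} {l l₁ l₂ : List V}

theorem of_adj (h : G.Adj a b) : IsPathList G a b [a, b] :=
  ⟨by simpa using h.ne, by simpa using h, rfl, rfl⟩

theorem of_isPath {p : G.Walk a b} (hp : p.IsPath) : IsPathList G a b p.support where
  nodup := hp.support_nodup
  isChain := p.isChain_adj_support
  head?_eq := by rw [List.head?_eq_some_head p.support_ne_nil, p.head_support]
  getLast?_eq := by rw [List.getLast?_eq_some_getLast p.support_ne_nil, p.getLast_support]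

theorem ne_nil (h : IsPathList G a b l) : l ≠ [] := by
  rintro rfl
  simpa using h.head?_eq

theorem append (h₁ : IsPathList G a b l₁) (h₂ : IsPathList G c d l₂) (hbc : G.Adj b c)
    (hd : l₁.Disjoint l₂) : IsPathList G a d (l₁ ++ l₂) where
  nodup := h₁.nodup.append h₂.nodup hd
  isChain := h₁.isChain.append h₂.isChain (by simpa [h₁.getLast?_eq, h₂.head?_eq])
  head?_eq := by rw [List.head?_append_of_ne_nil _ h₁.ne_nil, h₁.head?_eq]
  getLast?_eq := by rw [List.getLast?_append_of_ne_nil _ h₂.ne_nil, h₂.getLast?_eq]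

theorem reverse (h : IsPathList G a b l) : IsPathList G b a l.reverse where
  nodup := List.nodup_reverse.2 h.nodup
  isChain := List.isChain_reverse.2 (h.isChain.imp fun _ _ hadj ↦ hadj.symm)
  head?_eq := by rw [List.head?_reverse, h.getLast?_eq]
  getLast?_eq := by rw [List.getLast?_reverse, h.head?_eq]

theorem of_sup_edge_left {x y : V} (h : IsPathList (G ⊔ SimpleGraph.edge x y) a b l)
    (hx : x ∉ l) : IsPathList G a b l where
  __ := h
  isChain := by
    refine h.isChain.imp_of_mem_imp fun u w hu hw hadj ↦ ?_
    have hux : u ≠ x := fun h ↦ hx (h ▸ hu)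
    have hwx : w ≠ x := fun h ↦ hx (h ▸ hw)
    simpa [SimpleGraph.edge_adj, hux, hwx] using hadj

theorem of_sup_edge_right {x y : V} (h : IsPathList (G ⊔ SimpleGraph.edge x y) a b l)
    (hy : y ∉ l) : IsPathList G a b l :=
  of_sup_edge_left (SimpleGraph.edge_comm x y ▸ h) hy

end IsPathList

/-- The cyclic sequence `c` enumerates distinct vertices, each adjacent to the next. Besides the
cycles of `G`, this allows the empty sequence and an edge traversed back and forth. -/
structure IsVertexCycle (G : SimpleGraph V) (c : Cycle V) : Prop where
  nodup : c.Nodup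
  chain : c.Chain G.Adj

theorem IsPathList.isVertexCycle {a b : V} {l : List V} (h : IsPathList G a b l)
    (hba : G.Adj b a) : IsVertexCycle G l :=
  ⟨h.nodup, (cycle_chain_coe_iff h.head?_eq h.getLast?_eq).2 ⟨h.isChain, hba⟩⟩

namespace IsVertexCycle

theorem isHamiltonian [Fintype V] [DecidableEq V] {c : Cycle V} (hc : IsVertexCycle G c)
    (hV : 3 ≤ Fintype.card V) (hmem : ∀ v, v ∈ c) : G.IsHamiltonian := by
  intro _
  induction c using Quotient.inductionOn' with | h l
  obtain ⟨hnd : l.Nodup, hch : (l : Cycle V).Chain G.Adj⟩ := hc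
  have hne : l ≠ [] := by
    rintro rfl
    obtain ⟨v⟩ : Nonempty V := Fintype.card_pos_iff.1 (by omega)
    exact Cycle.notMem_nil v (hmem v)
  rw [cycle_chain_coe_iff (List.head?_eq_some_head hne) (List.getLast?_eq_some_getLast hne)] at hch
  let p := SimpleGraph.Walk.ofSupport l hne hch.1
  have hsupp : p.support = l := SimpleGraph.Walk.support_ofSupport _ _
  have hpath : p.IsPath := .mk' (by rwa [hsupp])
  have hham : p.IsHamiltonian := hpath.isHamiltonian_of_mem fun v ↦ by
    rw [hsupp]
    exact hmem v
  refine ⟨_, .cons hch.2 p, ?_, fun v ↦ by simpa using hham v⟩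
  rw [SimpleGraph.Walk.isCycle_iff_isPath_tail_and_le_length, SimpleGraph.Walk.length_cons,
    hham.length_eq]
  exact ⟨by simpa using hpath, by omega⟩

variable [DecidableEq V] {c : Cycle V} {x y : V}

/-- The successor map along the cyclic sequence `c`, fixing the vertices outside `c`. -/
def succ (hc : IsVertexCycle G c) : Equiv.Perm V :=
  c.formPerm hc.nodup

theorem succ_mem (hc : IsVertexCycle G c) (hx : x ∈ c) : hc.succ x ∈ c := by
  rw [succ, Cycle.formPerm_apply_mem_eq_next _ _ _ hx]
  exact c.next_mem _ _ _

theorem exists_isPathList (hc : IsVertexCycle G c) (hx : x ∈ c) :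
    ∃ l : List V, (l : Cycle V) = c ∧ IsPathList G (hc.succ x) x l := by
  obtain ⟨l, rfl, hhead, hlast⟩ := exists_coe_eq_and_getLast?_eq_of_mem hc.nodup hx
  exact ⟨l, rfl, hc.nodup, ((cycle_chain_coe_iff hhead hlast).1 hc.chain).1, hhead, hlast⟩

theorem adj_succ (hc : IsVertexCycle G c) (hx : x ∈ c) : G.Adj x (hc.succ x) := by
  obtain ⟨l, rfl, hl⟩ := hc.exists_isPathList hx
  exact ((cycle_chain_coe_iff hl.head?_eq hl.getLast?_eq).1 hc.chain).2

theorem exists_isPathList_append (hc : IsVertexCycle G c) (hx : x ∈ c) (hy : y ∈ c)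
    (hxy : x ≠ y) :
    ∃ l₁ l₂ : List V, ((l₁ ++ l₂ : List V) : Cycle V) = c ∧ l₁.Disjoint l₂ ∧
      IsPathList G (hc.succ x) y l₁ ∧ IsPathList G (hc.succ y) x l₂ := by
  obtain ⟨l₁, l₂, rfl, ⟨hhead₁, hlast₁⟩, hhead₂, hlast₂⟩ :=
    exists_coe_append_eq_and_getLast?_eq_of_mem hc.nodup hx hy hxy
  obtain ⟨hnd₁, hnd₂, hd⟩ := List.nodup_append'.1 hc.nodup
  have hhead : (l₁ ++ l₂).head? = some (hc.succ x) := by simp [hhead₁, succ]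
  have hlast : (l₁ ++ l₂).getLast? = some x := by simp [hlast₂]
  obtain ⟨hch₁, hch₂, -⟩ :=
    List.isChain_append.1 ((cycle_chain_coe_iff hhead hlast).1 hc.chain).1
  exact ⟨l₁, l₂, rfl, hd, ⟨hnd₁, hch₁, hhead₁, hlast₁⟩, hnd₂, hch₂, hhead₂, hlast₂⟩

end IsVertexCycle

end PathsAndCycles

section ChvatalErdos

variable {V : Type*} {G : SimpleGraph V} {c : Cycle V} {a b u v x y : V}

/-- The vertices `a` and `b` are joined by a walk of `G` that avoids the cyclic sequence `c`, that
is, they lie in the same component of `G - c`. -/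
def JoinedOff (G : SimpleGraph V) (c : Cycle V) (a b : V) : Prop :=
  ∃ p : G.Walk a b, ∀ x ∈ p.support, x ∉ c

namespace JoinedOff

theorem refl (ha : a ∉ c) : JoinedOff G c a a :=
  ⟨.nil, by simpa using ha⟩

theorem symm : JoinedOff G c a b → JoinedOff G c b a :=
  fun ⟨p, hp⟩ ↦ ⟨p.reverse, by simpa using hp⟩

theorem trans : JoinedOff G c a b → JoinedOff G c b v → JoinedOff G c a v :=
  fun ⟨p, hp⟩ ⟨q, hq⟩ ↦ ⟨p.append q, fun x hx ↦
    ((p.mem_support_append_iff q).1 hx).elim (hp x) (hq x)⟩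

theorem notMem_right : JoinedOff G c a b → b ∉ c :=
  fun ⟨p, hp⟩ ↦ hp b p.end_mem_support

theorem of_adj (hab : G.Adj a b) (ha : a ∉ c) (hb : b ∉ c) : JoinedOff G c a b :=
  ⟨hab.toWalk, by simp [ha, hb]⟩

theorem exists_isPathList (h : JoinedOff G c a b) :
    ∃ l, IsPathList G a b l ∧ ∀ x ∈ l, x ∉ c := by
  classical
  obtain ⟨p, hp⟩ := h
  exact ⟨p.bypass.support, .of_isPath p.bypass_isPath,
    fun x hx ↦ hp x (p.support_bypass_subset_support hx)⟩

end JoinedOff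

open scoped Classical in
/-- The attachments on the cyclic sequence `c` of the component of `G - c` that contains `v`: the
vertices of `c` with a neighbour in that component. -/
noncomputable def attachments [Fintype V] (G : SimpleGraph V) (c : Cycle V) (v : V) : Finset V :=
  {x | x ∈ c ∧ ∃ u, JoinedOff G c v u ∧ G.Adj x u}

theorem mem_attachments [Fintype V] :
    x ∈ attachments G c v ↔ x ∈ c ∧ ∃ u, JoinedOff G c v u ∧ G.Adj x u := by
  simp [attachments]

theorem IsKConnected.le_card_attachments [Fintype V] {k : ℕ} (hG : IsKConnected G k) (hv : v ∉ c)
    (hx : x ∈ c) (hxv : x ∉ attachments G c v) : k ≤ #(attachments G c v) := by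
  by_contra! hlt
  have hclosed : ∀ {a b : ((attachments G c v : Set V)ᶜ : Set V)}, (G.induce _).Walk a b →
      JoinedOff G c v a → JoinedOff G c v b := by
    intro a _ p ha
    induction p with
    | nil => exact ha
    | @cons a d _ had _ ih =>
      have hadj : G.Adj a d := had
      have hd : (d : V) ∉ c := fun hd ↦ d.2 (mem_attachments.2 ⟨hd, a, ha, hadj.symm⟩)
      exact ih (ha.trans (.of_adj hadj ha.notMem_right hd))
  have hvS : v ∉ attachments G c v := fun h ↦ hv (mem_attachments.1 h).1
  obtain ⟨p⟩ := (hG.2 _ hlt).preconnected ⟨v, hvS⟩ ⟨x, hxv⟩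
  exact (hclosed p (.refl hv)).notMem_right hx

theorem IsKConnected.le_degree [Fintype V] [DecidableRel G.Adj] {k : ℕ} (hG : IsKConnected G k)
    (v : V) : k ≤ G.degree v := by
  classical
  by_contra! hlt
  have hcard : #(insert v (G.neighborFinset v)) < Fintype.card V := by
    have := Finset.card_insert_le v (G.neighborFinset v)
    rw [G.card_neighborFinset_eq_degree] at this
    have := hG.1
    omega
  obtain ⟨w, -, hw⟩ := Finset.exists_mem_notMem_of_card_lt_card hcard
  rw [Finset.mem_insert, not_or] at hw
  obtain ⟨p⟩ := (hG.2 _ ((G.card_neighborFinset_eq_degree v).trans_lt hlt)).preconnected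
    ⟨v, by simp⟩ ⟨w, by simpa using hw.2⟩
  cases p with
  | nil => exact hw.1 rfl
  | @cons _ d _ hvd _ => exact d.2 (by simpa using (hvd : G.Adj v d))

theorem exists_maximalFor_isVertexCycle_length [Finite V] (G : SimpleGraph V) :
    ∃ c, MaximalFor (IsVertexCycle G) Cycle.length c := by
  classical
  cases nonempty_fintype V
  refine Set.Finite.exists_maximalFor Cycle.length {c | IsVertexCycle G c} ?_
    ⟨Cycle.nil, Cycle.nodup_nil, Cycle.Chain.nil _⟩
  have hfin : Finite {c : Cycle V // c.Nodup} := inferInstance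
  exact (Set.finite_coe_iff.1 hfin).subset fun c hc ↦ hc.nodup

section Longest

variable [DecidableEq V] (hc : MaximalFor (IsVertexCycle G) Cycle.length c)
include hc

theorem not_adj_succ_of_joinedOff (hab : JoinedOff G c a b) (hx : x ∈ c) (hxa : G.Adj x a) :
    ¬ G.Adj b (hc.prop.succ x) := by
  intro hbx
  obtain ⟨p, hp, hpc⟩ := hab.exists_isPathList
  obtain ⟨l, rfl, hl⟩ := hc.prop.exists_isPathList hx
  have hlonger := (hl.append hp hxa fun z hz hzp ↦ hpc z hzp hz).isVertexCycle hbx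
  refine hc.not_gt hlonger ?_
  simpa using List.length_pos_of_ne_nil hp.ne_nil

theorem not_adj_succ_succ_of_joinedOff (hab : JoinedOff G c a b) (hx : x ∈ c) (hy : y ∈ c)
    (hxy : x ≠ y) (hya : G.Adj y a) (hxb : G.Adj x b) :
    ¬ G.Adj (hc.prop.succ x) (hc.prop.succ y) := by
  intro hadj
  obtain ⟨p, hp, hpc⟩ := hab.exists_isPathList
  obtain ⟨l₁, l₂, hl, hd, hl₁, hl₂⟩ := hc.prop.exists_isPathList_append hx hy hxy
  have hmem {z : V} : z ∈ c ↔ z ∈ l₁ ∨ z ∈ l₂ := by rw [← hl, Cycle.mem_coe_iff, List.mem_append]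
  have hl₁p : l₁.Disjoint p := fun z hz hzp ↦ hpc z hzp (hmem.2 (.inl hz))
  have hl₂p : (l₁ ++ p).Disjoint l₂.reverse := by
    rw [List.disjoint_append_left, List.disjoint_reverse_right, List.disjoint_reverse_right]
    exact ⟨hd, fun z hzp hz ↦ hpc z hzp (hmem.2 (.inr hz))⟩
  -- Follow `c` from `succ x` to `y`, cross to `x` through `p`, and follow `c` backwards from `x`
  -- to `succ y`.
  have hlonger := ((hl₁.append hp hya hl₁p).append hl₂.reverse hxb.symm hl₂p).isVertexCycle
    hadj.symm
  refine hc.not_gt hlonger ?_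
  rw [← hl]
  simpa using List.length_pos_of_ne_nil hp.ne_nil

theorem succ_notMem_attachments [Fintype V] (hx : x ∈ attachments G c v) :
    hc.prop.succ x ∉ attachments G c v := by
  intro hsucc
  obtain ⟨hxc, a, hva, hxa⟩ := mem_attachments.1 hx
  obtain ⟨-, b, hvb, hb⟩ := mem_attachments.1 hsucc
  exact not_adj_succ_of_joinedOff hc (hva.symm.trans hvb) hxc hxa hb.symm

theorem isIndepSet_insert_image_succ_attachments [Fintype V] :
    G.IsIndepSet (insert v ((attachments G c v).image hc.prop.succ) : Finset V) := by
  rw [Finset.coe_insert, Finset.coe_image, SimpleGraph.isIndepSet_iff, Set.pairwise_insert]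
  constructor
  · rintro _ ⟨x, hx, rfl⟩ _ ⟨y, hy, rfl⟩ hne
    obtain ⟨hxc, b, hvb, hxb⟩ := mem_attachments.1 hx
    obtain ⟨hyc, a, hva, hya⟩ := mem_attachments.1 hy
    exact not_adj_succ_succ_of_joinedOff hc (hva.symm.trans hvb) hxc hyc
      (ne_of_apply_ne _ hne) hya hxb
  · rintro _ ⟨x, hx, rfl⟩ -
    obtain ⟨hxc, a, hva, hxa⟩ := mem_attachments.1 hx
    have hnadj := not_adj_succ_of_joinedOff hc hva.symm hxc hxa
    exact ⟨hnadj, fun h ↦ hnadj h.symm⟩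

end Longest

theorem exists_isNIndepSet_of_not_isHamiltonian [Fintype V] [DecidableEq V] {k : ℕ} (hk : k ≠ 0)
    (hG : IsKConnected G k) (hV : 3 ≤ Fintype.card V) (hham : ¬ G.IsHamiltonian) :
    ∃ I, G.IsNIndepSet (k + 1) I := by
  classical
  obtain ⟨c, hc⟩ := exists_maximalFor_isVertexCycle_length G
  obtain ⟨v, hv⟩ : ∃ v, v ∉ c := by
    by_contra! hmem
    exact hham (hc.prop.isHamiltonian hV hmem)
  obtain ⟨x, hx, hxv⟩ : ∃ x ∈ c, x ∉ attachments G c v := by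
    obtain ⟨w, hvw⟩ := (G.degree_pos_iff_exists_adj v).1 (hk.pos.trans_le (hG.le_degree v))
    have hlen : 2 ≤ c.length := by
      by_contra! hlt
      exact hc.not_gt ((IsPathList.of_adj hvw).isVertexCycle hvw.symm) hlt
    obtain ⟨x, hx⟩ : ∃ x, x ∈ c := by
      induction c using Quotient.inductionOn' with | h l
      exact List.exists_mem_of_length_pos (two_pos.trans_le hlen)
    by_cases hxv : x ∈ attachments G c v
    · exact ⟨_, hc.prop.succ_mem hx, succ_notMem_attachments hc hxv⟩
    · exact ⟨x, hx, hxv⟩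
  have hvI : v ∉ (attachments G c v).image hc.prop.succ := by
    rw [Finset.mem_image]
    rintro ⟨y, hy, rfl⟩
    exact hv (hc.prop.succ_mem (mem_attachments.1 hy).1)
  have hcard : k + 1 ≤ #(insert v ((attachments G c v).image hc.prop.succ)) := by
    rw [Finset.card_insert_of_notMem hvI, Finset.card_image_of_injective _ (Equiv.injective _)]
    exact Nat.succ_le_succ (hG.le_card_attachments hv hx hxv)
  obtain ⟨I, hI, hIcard⟩ := Finset.exists_subset_card_eq hcard
  exact ⟨I, (isIndepSet_insert_image_succ_attachments hc).mono (Finset.coe_subset.2 hI), hIcard⟩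

end ChvatalErdos

section MoonMoser

variable {V : Type*} {G : SimpleGraph V} {c : Cycle V} {x y w : V}

theorem exists_isPathList_of_forall_adj {m : ℕ} {A B : Finset V} (hA : #A = m + 1)
    (hB : #B = m + 1) (hAB : ∀ a ∈ A, ∀ b ∈ B, G.Adj a b) :
    ∃ a ∈ A, ∃ b ∈ B, ∃ l, IsPathList G a b l ∧ ∀ v, v ∈ l ↔ v ∈ A ∨ v ∈ B := by
  classical
  induction m generalizing A B with
  | zero =>
    obtain ⟨a, rfl⟩ := Finset.card_eq_one.1 hA
    obtain ⟨b, rfl⟩ := Finset.card_eq_one.1 hB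
    exact ⟨a, by simp, b, by simp, [a, b], .of_adj (by simpa using hAB), by simp⟩
  | succ m ih =>
    obtain ⟨a, A, ha, rfl, hA'⟩ := Finset.card_eq_succ.1 hA
    obtain ⟨b, B, hb, rfl, hB'⟩ := Finset.card_eq_succ.1 hB
    simp only [Finset.forall_mem_insert] at hAB
    obtain ⟨⟨hab, haB⟩, hAB⟩ := hAB
    obtain ⟨a', ha', b', hb', l, hl, hmem⟩ := ih hA' hB' fun x hx y hy ↦ (hAB x hx).2 y hy
    have haB' : a ∉ B := fun h ↦ (haB a h).ne rfl
    have hbA' : b ∉ A := fun h ↦ (hAB b h).1.ne rfl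
    have hd : [a, b].Disjoint l := by simp [hmem, ha, hb, haB', hbA']
    refine ⟨a, by simp, b', by simp [hb'], _,
      (IsPathList.of_adj hab).append hl (hAB a' ha').1.symm hd, fun v ↦ ?_⟩
    simp only [List.mem_append, List.mem_cons, List.not_mem_nil, or_false, hmem,
      Finset.mem_insert]
    tauto

/-- There is a cyclic sequence of adjacent distinct vertices through all of `V`. For at least three
vertices this is Hamiltonicity; in this form it also makes sense for smaller graphs. -/
def HasSpanningVertexCycle (G : SimpleGraph V) : Prop :=
  ∃ c, IsVertexCycle G c ∧ ∀ v, v ∈ c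

theorem HasSpanningVertexCycle.of_forall_adj [Fintype V] [DecidableEq V] {A B : Finset V}
    (hA : A.Nonempty) (hcard : #A = #B) (hcover : A ∪ B = univ)
    (hAB : ∀ a ∈ A, ∀ b ∈ B, G.Adj a b) : HasSpanningVertexCycle G := by
  obtain ⟨m, hm⟩ := Nat.exists_eq_succ_of_ne_zero hA.card_ne_zero
  obtain ⟨a, ha, b, hb, l, hl, hmem⟩ := exists_isPathList_of_forall_adj hm (hcard ▸ hm) hAB
  refine ⟨l, hl.isVertexCycle (hAB a ha b hb).symm, fun v ↦ ?_⟩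
  rw [Cycle.mem_coe_iff, hmem, ← Finset.mem_union, hcover]
  exact Finset.mem_univ v

namespace IsVertexCycle

variable [DecidableEq V]

theorem of_sup_edge (hc : IsVertexCycle (G ⊔ SimpleGraph.edge x y) c) (hx : x ∈ c) (hy : y ∈ c)
    (hxy : x ≠ y) (hsx : hc.succ x ≠ y) (hsy : hc.succ y ≠ x) : IsVertexCycle G c := by
  have hadjx : G.Adj x (hc.succ x) := by
    simpa [SimpleGraph.edge_adj, hsx, hxy] using hc.adj_succ hx
  have hadjy : G.Adj y (hc.succ y) := by
    simpa [SimpleGraph.edge_adj, hsy, hxy.symm] using hc.adj_succ hy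
  obtain ⟨l₁, l₂, hl, hd, hl₁, hl₂⟩ := hc.exists_isPathList_append hx hy hxy
  have hx₁ : x ∉ l₁ := fun h ↦ hd h (List.mem_of_getLast? hl₂.getLast?_eq)
  have hy₂ : y ∉ l₂ := hd (List.mem_of_getLast? hl₁.getLast?_eq)
  rw [← hl]
  exact ((hl₁.of_sup_edge_left hx₁).append (hl₂.of_sup_edge_right hy₂) hadjy hd).isVertexCycle hadjx

theorem exists_of_sup_edge_of_adj (hc : IsVertexCycle (G ⊔ SimpleGraph.edge x y) c) (hx : x ∈ c)
    (hw : w ∈ c) (hsx : hc.succ x = y) (hwx : G.Adj w x) (hsw : G.Adj (hc.succ w) y) :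
    ∃ c', IsVertexCycle G c' ∧ ∀ v ∈ c, v ∈ c' := by
  obtain ⟨l₁, l₂, hl, hd, hl₁, hl₂⟩ := hc.exists_isPathList_append hx hw hwx.ne'
  rw [hsx] at hl₁
  have hx₁ : x ∉ l₁ := fun h ↦ hd h (List.mem_of_getLast? hl₂.getLast?_eq)
  have hy₂ : y ∉ l₂ := hd (List.mem_of_head? hl₁.head?_eq)
  -- Follow `c` from `y` to `w`, jump to `x`, and follow `c` backwards from `x` to `succ w`.
  refine ⟨_, ((hl₁.of_sup_edge_left hx₁).append (hl₂.of_sup_edge_right hy₂).reverse hwx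
    (List.disjoint_reverse_right.2 hd)).isVertexCycle hsw, fun v hv ↦ ?_⟩
  simpa [← hl] using hv

end IsVertexCycle

variable [Fintype V] [DecidableRel G.Adj] {A B : Finset V}

theorem exists_adj_adj_succ_of_card_lt_degree_add_degree [DecidableEq V]
    (hc : IsVertexCycle (G ⊔ SimpleGraph.edge x y) c) (hmem : ∀ v, v ∈ c)
    (hG : G.IsBipartiteWith ↑A ↑B) (hx : x ∈ A) (hy : y ∈ B)
    (hdeg : #B < G.degree x + G.degree y) : ∃ w, G.Adj w x ∧ G.Adj (hc.succ w) y := by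
  have hNx : G.neighborFinset x ⊆ B := SimpleGraph.isBipartiteWith_neighborFinset_subset hG hx
  have hNy : (G.neighborFinset y).map hc.succ.symm.toEmbedding ⊆ B := by
    intro w hw
    have hyw : G.Adj y (hc.succ w) := by simpa using hw
    have hsw : hc.succ w ∈ A := hG.symm.mem_of_mem_adj hy hyw
    have hsy : hc.succ w ≠ y := fun h ↦ Set.disjoint_left.1 hG.disjoint hsw (by rwa [h])
    obtain hadj | hadj := hc.adj_succ (hmem w)
    · exact hG.mem_of_mem_adj hsw hadj.symm
    · obtain ⟨⟨-, h⟩ | ⟨rfl, -⟩, -⟩ := (SimpleGraph.edge_adj ..).1 hadj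
      exacts [absurd h hsy, hy]
  obtain ⟨w, hw⟩ := Finset.inter_nonempty_of_card_lt_card_add_card hNx hNy (by simpa using hdeg)
  obtain ⟨hxw, hyw⟩ : G.Adj x w ∧ G.Adj y (hc.succ w) := by simpa using hw
  exact ⟨w, hxw.symm, hyw.symm⟩

theorem HasSpanningVertexCycle.of_sup_edge
    (h : HasSpanningVertexCycle (G ⊔ SimpleGraph.edge x y)) (hG : G.IsBipartiteWith ↑A ↑B)
    (hcard : #A = #B) (hx : x ∈ A) (hy : y ∈ B) (hdeg : #A < G.degree x + G.degree y) :
    HasSpanningVertexCycle G := by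
  classical
  obtain ⟨c, hc, hmem⟩ := h
  have hxy : x ≠ y := fun h ↦ Set.disjoint_left.1 hG.disjoint hx (h ▸ hy)
  by_cases hsx : hc.succ x = y
  · obtain ⟨w, hwx, hwy⟩ :=
      exists_adj_adj_succ_of_card_lt_degree_add_degree hc hmem hG hx hy (hcard ▸ hdeg)
    obtain ⟨c', hc', hcc'⟩ := hc.exists_of_sup_edge_of_adj (hmem x) (hmem w) hsx hwx hwy
    exact ⟨c', hc', fun v ↦ hcc' v (hmem v)⟩
  by_cases hsy : hc.succ y = x
  · have hc₂ : IsVertexCycle (G ⊔ SimpleGraph.edge y x) c := SimpleGraph.edge_comm x y ▸ hc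
    obtain ⟨w, hwy, hwx⟩ := exists_adj_adj_succ_of_card_lt_degree_add_degree hc₂ hmem hG.symm hy hx
      (by rwa [add_comm])
    obtain ⟨c', hc', hcc'⟩ := hc₂.exists_of_sup_edge_of_adj (hmem y) (hmem w) hsy hwy hwx
    exact ⟨c', hc', fun v ↦ hcc' v (hmem v)⟩
  exact ⟨c, hc.of_sup_edge (hmem x) (hmem y) hxy hsx hsy, hmem⟩

theorem isHamiltonian_of_isBipartiteWith [DecidableEq V] (hG : G.IsBipartiteWith ↑A ↑B)
    (hcover : A ∪ B = univ) (hcard : #A = #B) (hA : 2 ≤ #A)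
    (hdeg : ∀ a ∈ A, ∀ b ∈ B, ¬ G.Adj a b → #A < G.degree a + G.degree b) : G.IsHamiltonian := by
  classical
  suffices HasSpanningVertexCycle G by
    obtain ⟨c, hc, hmem⟩ := this
    have hV : #A + #B = Fintype.card V := by
      rw [← Finset.card_union_of_disjoint (Finset.disjoint_coe.1 hG.disjoint), hcover, card_univ]
    exact hc.isHamiltonian (by omega) hmem
  by_contra hnot
  obtain ⟨H, hGH, ⟨hH, hHnot⟩, hmax⟩ :=
    (Set.toFinite {H : SimpleGraph V | H.IsBipartiteWith ↑A ↑B ∧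
      ¬ HasSpanningVertexCycle H}).exists_le_maximal ⟨hG, hnot⟩
  obtain ⟨a, ha, b, hb, hab⟩ : ∃ a ∈ A, ∃ b ∈ B, ¬ H.Adj a b := by
    by_contra! hadj
    exact hHnot (.of_forall_adj (Finset.card_pos.1 (by omega)) hcard hcover hadj)
  have hne : a ≠ b := fun h ↦ Set.disjoint_left.1 hG.disjoint ha (h ▸ hb)
  have hbip : (H ⊔ SimpleGraph.edge a b).IsBipartiteWith ↑A ↑B := by
    refine ⟨hG.disjoint, fun v w hvw ↦ hvw.elim (fun h ↦ hH.mem_of_adj h) fun h ↦ ?_⟩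
    obtain ⟨⟨rfl, rfl⟩ | ⟨rfl, rfl⟩, -⟩ := (SimpleGraph.edge_adj ..).1 h
    exacts [.inl ⟨ha, hb⟩, .inr ⟨hb, ha⟩]
  have hspan : HasSpanningVertexCycle (H ⊔ SimpleGraph.edge a b) := by
    by_contra hspan
    exact (H.lt_sup_edge _ _ hne hab).not_ge (hmax ⟨hbip, hspan⟩ le_sup_left)
  refine hHnot (hspan.of_sup_edge hH hcard ha hb ?_)
  have hda := SimpleGraph.degree_le_of_le hGH (v := a)
  have hdb := SimpleGraph.degree_le_of_le hGH (v := b)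
  have := hdeg a ha b hb fun h ↦ hab (hGH h)
  omega

end MoonMoser

section InverseDegree

variable {V : Type*} [Fintype V] {G : SimpleGraph V} [DecidableRel G.Adj] {A : Finset V}

theorem card_biUnion_incidenceFinset_of_isIndepSet [DecidableEq V] (hA : G.IsIndepSet A) :
    #(A.biUnion fun a ↦ G.incidenceFinset a) = ∑ a ∈ A, G.degree a := by
  rw [Finset.card_biUnion]
  · simp only [SimpleGraph.card_incidenceFinset_eq_degree]
  · intro a ha b hb hab
    refine Finset.disjoint_left.2 fun e hea heb ↦ ?_
    rw [SimpleGraph.mem_incidenceFinset] at hea heb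
    exact hA ha hb hab (G.adj_of_mem_incidenceSet hab hea heb)

theorem sum_degree_le_card_edgeFinset_of_isIndepSet (hA : G.IsIndepSet A) :
    ∑ a ∈ A, G.degree a ≤ #G.edgeFinset := by
  classical
  rw [← card_biUnion_incidenceFinset_of_isIndepSet hA]
  exact Finset.card_le_card (Finset.biUnion_subset.2 fun a _ ↦ G.incidenceFinset_subset a)

theorem card_mul_minDegree_le_card_edgeFinset_of_isIndepSet (hA : G.IsIndepSet A) :
    #A * G.minDegree ≤ #G.edgeFinset :=
  (Finset.card_nsmul_le_sum A _ _ fun v _ ↦ G.minDegree_le_degree v).trans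
    (sum_degree_le_card_edgeFinset_of_isIndepSet hA)

theorem card_edgeFinset_le_card_compl_mul_maxDegree_of_isIndepSet [DecidableEq V]
    (hA : G.IsIndepSet A) : #G.edgeFinset ≤ #Aᶜ * G.maxDegree := by
  have hsum : ∑ v ∈ A, G.degree v + ∑ v ∈ Aᶜ, G.degree v = 2 * #G.edgeFinset := by
    rw [Finset.sum_add_sum_compl, G.sum_degrees_eq_twice_card_edges]
  have hle := sum_degree_le_card_edgeFinset_of_isIndepSet hA
  calc
    #G.edgeFinset ≤ ∑ v ∈ Aᶜ, G.degree v := by omega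
    _ ≤ #Aᶜ * G.maxDegree := Finset.sum_le_card_nsmul Aᶜ _ _ fun v _ ↦ G.degree_le_maxDegree v

theorem isBipartiteWith_compl_of_card_edgeFinset_le [DecidableEq V]
    (hA : G.IsIndepSet A) (h : #G.edgeFinset ≤ ∑ a ∈ A, G.degree a) :
    G.IsBipartiteWith ↑A ↑Aᶜ := by
  have hcover : (A.biUnion fun a ↦ G.incidenceFinset a) = G.edgeFinset :=
    Finset.eq_of_subset_of_card_le (Finset.biUnion_subset.2 fun a _ ↦ G.incidenceFinset_subset a)
      (by rwa [card_biUnion_incidenceFinset_of_isIndepSet hA])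
  refine ⟨Finset.disjoint_coe.2 disjoint_compl_right, fun x y hxy ↦ ?_⟩
  have hnot : ¬ (x ∈ A ∧ y ∈ A) := fun ⟨hx, hy⟩ ↦ hA hx hy hxy.ne hxy
  have hmem : x ∈ A ∨ y ∈ A := by
    have hedge : s(x, y) ∈ G.edgeFinset := SimpleGraph.mem_edgeFinset.2 hxy
    obtain ⟨a, ha, hae⟩ := Finset.mem_biUnion.1 (hcover ▸ hedge)
    rw [SimpleGraph.mem_incidenceFinset] at hae
    obtain rfl | rfl := Sym2.mem_iff.1 hae.2
    exacts [.inl ha, .inr ha]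
  simp only [Finset.mem_coe, Finset.mem_compl]
  tauto

theorem card_div_maxDegree_le_invDegree (hδ : 1 ≤ G.minDegree) :
    (Fintype.card V : ℝ) / G.maxDegree ≤ invDegree G :=
  calc
    (Fintype.card V : ℝ) / G.maxDegree = ∑ _u : V, 1 / (G.maxDegree : ℝ) := by
      simp [div_eq_mul_inv]
    _ ≤ invDegree G := Finset.sum_le_sum fun u _ ↦ by
      have hu : 0 < G.degree u := hδ.trans (G.minDegree_le_degree u)
      gcongr
      exact G.degree_le_maxDegree u

theorem eq_mul_of_add_div_le {a m d D e : ℝ} (ha : 0 < a) (hd : 0 < d) (hdD : d ≤ D)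
    (hae : a * d ≤ e) (hem : e ≤ m * D)
    (h : (a + m) / D ≤ m / D + 1 / (a * D ^ 3) *
      (2 * a * (a * d ^ 2 + e ^ 2 / m) - e ^ 2 - 2 * a * m * D ^ 2)) :
    e = a * d ∧ m = a := by
  have hD : 0 < D := hd.trans_le hdD
  have he : 0 < e := (mul_pos ha hd).trans_le hae
  have hm : 0 < m := pos_of_mul_pos_left (he.trans_le hem) hD.le
  have hclear : (a * D) ^ 2 + e ^ 2 + 2 * a * m * D ^ 2 ≤
      2 * (a * d) ^ 2 + 2 * a * (e ^ 2 / m) := by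
    rw [add_div, add_comm (a / D), add_le_add_iff_left, one_div_mul_eq_div,
      div_le_div_iff₀ hD (by positivity),
      show a * (a * D ^ 3) = (a * D) ^ 2 * D by ring, mul_le_mul_iff_left₀ hD] at h
    linarith
  have had : (a * d) ^ 2 ≤ e ^ 2 := by gcongr
  have haD : (a * d) ^ 2 ≤ (a * D) ^ 2 := by gcongr
  have hmD : 2 * a * (e ^ 2 / m) ≤ 2 * a * (m * D ^ 2) := by
    gcongr
    rw [div_le_iff₀ hm]
    calc
      e ^ 2 ≤ (m * D) ^ 2 := by gcongr
      _ = m * D ^ 2 * m := by ring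
  have he_eq : e = a * d := (pow_left_inj₀ he.le (by positivity) two_ne_zero).1 (by linarith)
  have hD_eq : e = a * D := (pow_left_inj₀ he.le (by positivity) two_ne_zero).1 (by linarith)
  have hm_eq : e = m * D := by
    refine (pow_left_inj₀ he.le (by positivity) two_ne_zero).1 ?_
    have hdiv : e ^ 2 / m = m * D ^ 2 :=
      mul_left_cancel₀ (by positivity) (hmD.antisymm (by linarith))
    rw [(div_eq_iff hm.ne').1 hdiv]
    ring
  exact ⟨he_eq, mul_right_cancel₀ hD.ne' (hm_eq.symm.trans hD_eq)⟩

theorem isBipartiteWith_compl_of_invDegree_le [DecidableEq V] (hδ : 1 ≤ G.minDegree)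
    (hA : G.IsIndepSet A) (hA_ne : A.Nonempty)
    (h : invDegree G ≤ (#Aᶜ : ℝ) / G.maxDegree + 1 / (#A * (G.maxDegree : ℝ) ^ 3) *
      (2 * #A * (#A * (G.minDegree : ℝ) ^ 2 + (#G.edgeFinset : ℝ) ^ 2 / #Aᶜ)
        - (#G.edgeFinset : ℝ) ^ 2 - 2 * #A * #Aᶜ * (G.maxDegree : ℝ) ^ 2)) :
    G.IsBipartiteWith ↑A ↑Aᶜ ∧ #A = #Aᶜ := by
  have hlower := card_mul_minDegree_le_card_edgeFinset_of_isIndepSet hA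
  have hupper := card_edgeFinset_le_card_compl_mul_maxDegree_of_isIndepSet hA
  have hinv := (card_div_maxDegree_le_invDegree hδ).trans h
  rw [← Finset.card_add_card_compl A, Nat.cast_add] at hinv
  obtain ⟨hedges, hcard⟩ := eq_mul_of_add_div_le (by exact_mod_cast hA_ne.card_pos)
    (by exact_mod_cast hδ) (by exact_mod_cast G.minDegree_le_maxDegree)
    (by exact_mod_cast hlower) (by exact_mod_cast hupper) hinv
  norm_cast at hedges hcard
  refine ⟨isBipartiteWith_compl_of_card_edgeFinset_le hA (hedges.trans_le ?_), hcard.symm⟩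
  exact Finset.card_nsmul_le_sum A _ _ fun v _ ↦ G.minDegree_le_degree v

end InverseDegree

/-- If `G` is a `k`-connected (`k ≥ 2`) graph with `n ≥ 3` vertices, `e` edges, minimum degree
`δ ≥ 1`, and maximum degree `Δ`, and
`Inv(G) ≤ (n − k − 1)/Δ + (1/((k+1)Δ³))(2(k+1)((k+1)δ² + e²/(n − k − 1)) − e² − 2(k+1)(n − k − 1)Δ²)`,
then `G` is Hamiltonian. -/
theorem stmt10 {V : Type*} [Fintype V] [DecidableEq V] (G : SimpleGraph V) [DecidableRel G.Adj]
    (k : ℕ) (hk : 2 ≤ k) (hconn : IsKConnected G k) (hn : 3 ≤ Fintype.card V)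
    (hδ : 1 ≤ G.minDegree)
    (h : invDegree G ≤ ((Fintype.card V : ℝ) - k - 1) / (G.maxDegree : ℝ)
        + (1 / (((k : ℝ) + 1) * (G.maxDegree : ℝ) ^ 3)) *
          (2 * ((k : ℝ) + 1) * (((k : ℝ) + 1) * (G.minDegree : ℝ) ^ 2
              + (G.edgeFinset.card : ℝ) ^ 2 / ((Fintype.card V : ℝ) - k - 1))
            - (G.edgeFinset.card : ℝ) ^ 2
            - 2 * ((k : ℝ) + 1) * ((Fintype.card V : ℝ) - k - 1) * (G.maxDegree : ℝ) ^ 2)) :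
    G.IsHamiltonian := by
  by_contra hG
  obtain ⟨A, hA, hAcard⟩ := exists_isNIndepSet_of_not_isHamiltonian (by omega) hconn hn hG
  have hA_ne : A.Nonempty := Finset.card_pos.1 (by omega)
  have hk_eq : (k : ℝ) + 1 = #A := by rw [hAcard, Nat.cast_succ]
  have hcompl : (Fintype.card V : ℝ) - k - 1 = #Aᶜ := by
    rw [sub_sub, hk_eq, ← Finset.card_add_card_compl A, Nat.cast_add, add_sub_cancel_left]
  rw [hcompl, hk_eq] at h
  obtain ⟨hbip, hcard⟩ := isBipartiteWith_compl_of_invDegree_le hδ hA hA_ne h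
  refine hG (isHamiltonian_of_isBipartiteWith hbip (Finset.union_compl A) hcard (by omega)
    fun a _ b _ _ ↦ ?_)
  have hdeg_a := hconn.le_degree a
  have hdeg_b := hconn.le_degree b
  omega
end

section
/- Let G be a k-connected (k ≥ 1) finite simple graph with n ≥ 9 vertices, e edges, minimum degree δ, and maximum degree Δ. If Z₁(G) ≥ (n − k − 2)·Δ² + e²/(2(k + 2)) + (k + 2)·Δ³/(2δ), then G is traceable. -/
open Finset

/-!
Suppose that a longest path `p`, starting at `u`, misses a vertex `x`. As in the proof of the
Chvátal–Erdős theorem, `x`, `u` and the successors on `p` of the neighbours of the component of `x`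
in `G - p` are pairwise nonadjacent, which gives an independent set `J` of size `k + 2` containing
`x` and `u`. Counting edges from `J` bounds `Z₁` by `(n - |J|) Δ² + Δ e`, and by AM-GM the
hypothesis bounds it from below by the same quantity, so equality holds throughout: `G` is regular
and `J` is one side of a balanced bipartition. Since `G` is connected this bipartition does not
depend on `x`, so every missed vertex is on the side of `u`. But `p` alternates between the sides
starting at `u`, hence meets the side of `u` at least as often as the other one, and the side of `u`
would be strictly larger.
-/

open SimpleGraph

section LongestPath

variable {V : Type*} {G : SimpleGraph V} {u v x a b c : V} {p : G.Walk u v}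

/-- `p` is a path with the largest number of vertices among all paths of `G`. -/
structure IsLongestPath (p : G.Walk u v) : Prop where
  isPath : p.IsPath
  length_le : ∀ ⦃u' v' : V⦄ (q : G.Walk u' v'), q.IsPath → q.length ≤ p.length

/-- `b` lies in the connected component of `a` in `G - S`. It is phrased with walks of `G` instead
of reachability in an induced subgraph, so that no subtypes occur. -/
def ReachableOff (G : SimpleGraph V) (S : Set V) (a b : V) : Prop :=
  ∃ w : G.Walk a b, ∀ y ∈ w.support, y ∉ S

namespace ReachableOff

variable {S : Set V}

theorem refl (ha : a ∉ S) : ReachableOff G S a a :=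
  ⟨Walk.nil, by simpa using ha⟩

theorem symm (h : ReachableOff G S a b) : ReachableOff G S b a := by
  obtain ⟨w, hw⟩ := h
  exact ⟨w.reverse, by simpa using hw⟩

theorem trans (hab : ReachableOff G S a b) (hbc : ReachableOff G S b c) :
    ReachableOff G S a c := by
  obtain ⟨w, hw⟩ := hab
  obtain ⟨w', hw'⟩ := hbc
  refine ⟨w.append w', fun y hy => ?_⟩
  exact ((w.mem_support_append_iff w').1 hy).elim (hw y) (hw' y)

theorem notMem_right (h : ReachableOff G S a b) : b ∉ S := by
  obtain ⟨w, hw⟩ := h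
  exact hw b w.end_mem_support

theorem step (hab : ReachableOff G S a b) (hbc : G.Adj b c) (hc : c ∉ S) :
    ReachableOff G S a c :=
  hab.trans ⟨hbc.toWalk, by simp [hab.notMem_right, hc]⟩

end ReachableOff

theorem IsLongestPath.false_of_detour (hp : IsLongestPath p) {A C : List V}
    (hperm : (A ++ C).Perm p.support) (hA : A.IsChain G.Adj) (hC : C.IsChain G.Adj)
    (hab : ReachableOff G {y | y ∈ p.support} a b)
    (hAa : ∀ y ∈ A.getLast?, G.Adj y a) (hbC : ∀ y ∈ C.head?, G.Adj b y) : False := by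
  classical
  obtain ⟨w, hw⟩ := hab
  let q := w.bypass
  have hq : ∀ y ∈ q.support, y ∉ A ++ C := fun y hy hyAC =>
    hw y (w.support_bypass_subset_support hy) (hperm.mem_iff.1 hyAC)
  have hperm' : (A ++ (q.support ++ C)).Perm (q.support ++ (A ++ C)) := by
    simpa only [List.append_assoc] using List.perm_append_comm.append_right C
  have hnodup : (A ++ (q.support ++ C)).Nodup :=
    hperm'.nodup_iff.2 <| w.bypass_isPath.support_nodup.append
      (hperm.nodup_iff.2 hp.isPath.support_nodup) hq
  have hchain : (A ++ (q.support ++ C)).IsChain G.Adj := by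
    refine hA.append (q.isChain_adj_support.append hC ?_) ?_
    · simpa [List.getLast?_eq_some_getLast q.support_ne_nil] using hbC
    · simpa [List.head?_append, List.head?_eq_some_head q.support_ne_nil] using hAa
  have hne : A ++ (q.support ++ C) ≠ [] := by simp
  have hle := hp.length_le (Walk.ofSupport _ hne hchain) <|
    Walk.isPath_def _ |>.2 <| by rwa [Walk.support_ofSupport]
  have hlen := hperm'.length_eq
  rw [List.length_append (as := q.support), hperm.length_eq, p.length_support,
    q.length_support] at hlen
  rw [Walk.length_ofSupport] at hle
  omega

/-- `y` is the first vertex of `p`, or its predecessor on `p` has a neighbour in the component of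
`x` in `G - p`. Together with `x`, these vertices form the independent set of the Chvátal–Erdős
argument; the first vertex is included because `A.getLast?` is `none` for `A = []`. -/
def IsEntry (p : G.Walk u v) (x y : V) : Prop :=
  ∃ (A C : List V) (a : V), p.support = A ++ y :: C ∧
    ReachableOff G {z | z ∈ p.support} x a ∧ ∀ z ∈ A.getLast?, G.Adj z a

theorem isEntry_start (p : G.Walk u v) (hx : x ∉ p.support) : IsEntry p x u :=
  ⟨[], p.support.tail, x, by simp, .refl hx, by simp⟩

theorem isEntry_of_infix {y z : V} (hyz : [y, z] <:+: p.support)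
    (hxa : ReachableOff G {z | z ∈ p.support} x a) (hya : G.Adj y a) : IsEntry p x z := by
  obtain ⟨A, C, h⟩ := hyz
  exact ⟨A ++ [y], C, a, by simp [← h], hxa, by simpa using hya⟩

theorem IsEntry.mem_support {y : V} (hy : IsEntry p x y) : y ∈ p.support := by
  obtain ⟨A, C, -, h, -⟩ := hy
  simp [h]

theorem isChain_adj_reverse {l : List V} (h : l.IsChain G.Adj) : l.reverse.IsChain G.Adj :=
  List.isChain_reverse.2 <| h.imp fun _ _ => Adj.symm

theorem IsEntry.not_adj_of_reachableOff (hp : IsLongestPath p) {y : V} (hy : IsEntry p x y)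
    (hb : ReachableOff G {z | z ∈ p.support} x b) : ¬ G.Adj b y := by
  obtain ⟨A, C, a, hsupp, ha, hAa⟩ := hy
  intro hby
  have hchain : (A ++ y :: C).IsChain G.Adj := hsupp ▸ p.isChain_adj_support
  exact hp.false_of_detour (.of_eq hsupp.symm) hchain.left_of_append hchain.right_of_append
    (ha.symm.trans hb) hAa (by simpa using hby)

theorem IsLongestPath.not_adj_of_support_eq (hp : IsLongestPath p) {A B C : List V} {y z : V}
    (hsupp : p.support = A ++ (y :: B) ++ z :: C)
    (hab : ReachableOff G {z | z ∈ p.support} a b) (hAa : ∀ t ∈ A.getLast?, G.Adj t a)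
    (hBb : ∀ t ∈ (y :: B).getLast?, G.Adj t b) : ¬ G.Adj y z := by
  intro hyz
  -- Reroute `p` as `A`, then `a` to `b` off `p`, then `y :: B` backwards, then `z :: C`.
  have hchain : (A ++ (y :: B) ++ z :: C).IsChain G.Adj := hsupp ▸ p.isChain_adj_support
  have hperm : (A ++ ((y :: B).reverse ++ z :: C)).Perm p.support := by
    rw [hsupp, List.append_assoc]
    exact ((List.reverse_perm _).append_right _).append_left _
  refine hp.false_of_detour hperm hchain.left_of_append.left_of_append
    ((isChain_adj_reverse hchain.left_of_append.right_of_append).append hchain.right_of_append ?_)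
    hab hAa ?_
  · simpa using hyz
  · intro t ht
    rw [List.head?_append, List.head?_reverse] at ht
    exact (hBb t (by simpa [List.getLast?_cons] using ht)).symm

theorem IsEntry.not_adj (hp : IsLongestPath p) {y z : V} (hy : IsEntry p x y)
    (hz : IsEntry p x z) : ¬ G.Adj y z := by
  obtain ⟨A, C, a, hsupp, ha, hAa⟩ := hy
  obtain ⟨A', C', b, hsupp', hb, hAb⟩ := hz
  rcases List.append_eq_append_iff.1 (hsupp.symm.trans hsupp') with ⟨B, rfl, hB⟩ | ⟨B, rfl, hB⟩
  · obtain ⟨rfl, ⟨⟩⟩ | ⟨B, rfl, -⟩ := List.cons_eq_append_iff.1 hB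
    · exact G.irrefl
    · exact hp.not_adj_of_support_eq hsupp' (ha.symm.trans hb) hAa (by simpa using hAb)
  · obtain ⟨rfl, ⟨⟩⟩ | ⟨B, rfl, -⟩ := List.cons_eq_append_iff.1 hB
    · exact G.irrefl
    · exact mt Adj.symm <|
        hp.not_adj_of_support_eq hsupp (hb.symm.trans ha) hAb (by simpa using hAa)

theorem eq_of_infix_of_infix {l : List V} (hl : l.Nodup) {y y' z : V} (h : [y, z] <:+: l)
    (h' : [y', z] <:+: l) : y = y' := by
  obtain ⟨A, C, rfl⟩ := h
  obtain ⟨A', C', h⟩ := h'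
  have hz : z ∉ (A ++ [y]) ++ C :=
    (List.nodup_cons.1 (List.nodup_middle.1 (by simpa using hl))).1
  rw [List.mem_append, not_or] at hz
  have hsplit : (A ++ [y]) ++ z :: C = (A' ++ [y']) ++ z :: C' := by simpa using h.symm
  have hinit := ((List.append_cons_inj_of_notMem hz.1 hz.2).1 hsplit).1
  exact List.singleton_inj.1 (List.append_inj_right' hinit rfl)

theorem IsLongestPath.exists_infix_of_adj (hp : IsLongestPath p) {y : V} (hy : y ∈ p.support)
    (ha : a ∉ p.support) (hya : G.Adj y a) : ∃ z, [y, z] <:+: p.support := by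
  obtain ⟨A, C, hAC⟩ := List.append_of_mem hy
  cases C with
  | nil =>
    exact (hp.false_of_detour (A := p.support) (C := []) (by simp) p.isChain_adj_support (by simp)
      (.refl ha) (by simpa [hAC] using hya) (by simp)).elim
  | cons z C => exact ⟨z, A, C, by simp [hAC]⟩

theorem IsKConnected.preconnected [Fintype V] {k : ℕ} (hG : IsKConnected G k) (hk : 1 ≤ k) :
    G.Preconnected := by
  intro y z
  have := (hG.2 ∅ (by rwa [card_empty])).preconnected ⟨y, by simp⟩ ⟨z, by simp⟩
  exact this.map (Embedding.induce _).toHom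

/-- The neighbours of a component of `G - S` separate it from the rest of `S`. -/
theorem IsKConnected.le_card_of_reachableOff [Fintype V] {k : ℕ} (hG : IsKConnected G k)
    {S : Set V} {N : Finset V} (hx : x ∉ S) {y : V} (hy : y ∈ S) (hyN : y ∉ N)
    (hNS : ∀ z ∈ N, z ∈ S)
    (hN : ∀ z ∈ S, ∀ a, ReachableOff G S x a → G.Adj z a → z ∈ N) : k ≤ #N := by
  by_contra! hlt
  have hxN : x ∉ N := fun h => hx (hNS x h)
  obtain ⟨w⟩ := (hG.2 N hlt).preconnected ⟨x, by simpa using hxN⟩ ⟨y, by simpa using hyN⟩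
  obtain ⟨d, -, hd, hd'⟩ := w.exists_boundary_dart {z | ReachableOff G S x z} (.refl hx)
    fun h => h.notMem_right hy
  have hadj : G.Adj d.fst d.snd := d.adj
  have hS : (d.snd : V) ∈ S := by_contra fun h => hd' (ReachableOff.step hd hadj h)
  exact d.snd.2 (hN _ hS _ hd hadj.symm)

theorem ne_start_of_infix (hp : p.IsPath) {y z : V} (h : [y, z] <:+: p.support) : z ≠ u := by
  obtain ⟨A, C, h⟩ := h
  have hz : z ∈ p.support.tail := by
    rw [← h]
    cases A <;> simp
  have hu : u ∉ p.support.tail :=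
    (List.nodup_cons.1 (p.cons_tail_support ▸ hp.support_nodup)).1
  exact fun hzu => hu (hzu ▸ hz)

theorem IsKConnected.exists_card_eq_forall_isEntry [Fintype V] {k : ℕ} (hG : IsKConnected G k)
    (hp : IsLongestPath p) (hx : x ∉ p.support) :
    ∃ I : Finset V, #I = k + 1 ∧ u ∈ I ∧ ∀ y ∈ I, IsEntry p x y := by
  classical
  let E : Finset V := {y | IsEntry p x y}
  let N : Finset V :=
    {y | y ∈ p.support ∧ ∃ a, ReachableOff G {z | z ∈ p.support} x a ∧ G.Adj y a}
  have hE : ∀ y, y ∈ E ↔ IsEntry p x y := by simp [E]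
  have hN : ∀ y, y ∈ N ↔
      y ∈ p.support ∧ ∃ a, ReachableOff G {z | z ∈ p.support} x a ∧ G.Adj y a := by simp [N]
  have huE : u ∈ E := (hE u).2 (isEntry_start p hx)
  have huN : u ∉ N := by
    intro h
    obtain ⟨-, a, ha, hua⟩ := (hN u).1 h
    exact (isEntry_start p hx).not_adj_of_reachableOff hp ha hua.symm
  have hkN : k ≤ #N := hG.le_card_of_reachableOff (S := {z | z ∈ p.support}) hx
    p.start_mem_support huN (fun z hz => ((hN z).1 hz).1)
    fun z hz a ha hza => (hN z).2 ⟨hz, a, ha, hza⟩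
  have hNE : #N ≤ #(E.erase u) := by
    refine card_le_card_of_forall_subsingleton (fun y z => [y, z] <:+: p.support) ?_ ?_
    · intro y hy
      obtain ⟨hyp, a, ha, hya⟩ := (hN y).1 hy
      obtain ⟨z, hyz⟩ := hp.exists_infix_of_adj hyp ha.notMem_right hya
      exact ⟨z, mem_erase.2
        ⟨ne_start_of_infix hp.isPath hyz, (hE z).2 (isEntry_of_infix hyz ha hya)⟩, hyz⟩
    · rintro z - y ⟨-, hy⟩ y' ⟨-, hy'⟩
      exact eq_of_infix_of_infix hp.isPath.support_nodup hy hy'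
  have hkE : k + 1 ≤ #E := by
    rw [← card_erase_add_one huE]
    omega
  obtain ⟨I, huI, hIE, hI⟩ :=
    exists_subsuperset_card_eq (singleton_subset_iff.2 huE) (by simp) hkE
  exact ⟨I, hI, singleton_subset_iff.1 huI, fun y hy => (hE y).1 (hIE hy)⟩

theorem IsKConnected.exists_isIndepSet_card_eq [Fintype V] {k : ℕ} (hG : IsKConnected G k)
    (hp : IsLongestPath p) (hx : x ∉ p.support) :
    ∃ J : Finset V, #J = k + 2 ∧ x ∈ J ∧ u ∈ J ∧ G.IsIndepSet J := by
  classical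
  obtain ⟨I, hI, huI, hentry⟩ := hG.exists_card_eq_forall_isEntry hp hx
  have hxI : x ∉ I := fun h => hx (hentry x h).mem_support
  refine ⟨insert x I, by rw [card_insert_of_notMem hxI, hI], mem_insert_self x I,
    mem_insert_of_mem huI, ?_⟩
  rw [coe_insert, IsIndepSet, Set.pairwise_insert]
  have hxy : ∀ y ∈ I, ¬ G.Adj x y := fun y hy =>
    (hentry y hy).not_adj_of_reachableOff hp (.refl hx)
  exact ⟨fun y hy z hz _ => (hentry y hy).not_adj hp (hentry z hz),
    fun y hy _ => ⟨hxy y hy, fun h => hxy y hy h.symm⟩⟩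

end LongestPath

section Bipartite

variable {V : Type*} {G : SimpleGraph V} {u v x : V} {p : G.Walk u v}

theorem exists_coloring_bool_of_isIndepSet {J : Set V} (hJ : G.IsIndepSet J)
    (hJc : G.IsIndepSet Jᶜ) : ∃ c : G.Coloring Bool, ∀ y, c y = true ↔ y ∈ J := by
  classical
  refine ⟨Coloring.mk (fun y => decide (y ∈ J)) fun {y z} hyz heq => ?_,
    fun y => decide_eq_true_iff⟩
  by_cases hy : y ∈ J
  · exact hJ hy (by simpa [hy] using heq) hyz.ne hyz
  · exact hJc hy (by simpa [hy] using heq) hyz.ne hyz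

theorem coloring_bool_eq_iff_eq (hG : G.Preconnected) (c c' : G.Coloring Bool) (y z : V) :
    c y = c z ↔ c' y = c' z := by
  obtain ⟨w⟩ := hG y z
  rw [Bool.eq_iff_iff, ← c.even_length_iff_congr w, c'.even_length_iff_congr w, ← Bool.eq_iff_iff]

theorem count_map_support_le (c : G.Coloring Bool) (p : G.Walk u v) :
    (p.support.map c).count (!c u) ≤ (p.support.map c).count (c u) := by
  have hchain : (p.support.map c).IsChain (· ≠ ·) :=
    List.isChain_map_of_isChain c (fun _ _ h => c.valid h) p.isChain_adj_support
  rw [← p.cons_tail_support, List.map_cons] at hchain ⊢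
  rw [List.count_cons_of_ne (by simp), List.count_cons_self]
  have := hchain.count_not_cons
  rw [this]
  omega

theorem card_filter_coloring_lt [Fintype V] (c : G.Coloring Bool) (hp : p.IsPath)
    (hcover : ∀ y, c y ≠ c u → y ∈ p.support) (hx : x ∉ p.support) (hxu : c x = c u) :
    #{y | c y ≠ c u} < #{y | c y = c u} := by
  classical
  have hcount : ∀ b, (p.support.map c).count b = #{y ∈ p.support.toFinset | c y = b} := by
    intro b
    rw [List.count, List.countP_map, List.countP_eq_length_filter,
      ← List.toFinset_card_of_nodup (hp.support_nodup.filter _), List.toFinset_filter]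
    simp only [Function.comp_apply, beq_iff_eq]
  calc #{y | c y ≠ c u} ≤ #{y ∈ p.support.toFinset | c y = !c u} :=
        card_le_card fun y hy => by
          have hy : c y ≠ c u := by simpa using hy
          simp [hcover y hy, Bool.eq_not.2 hy]
    _ ≤ #{y ∈ p.support.toFinset | c y = c u} := by
        rw [← hcount, ← hcount]
        exact count_map_support_le c p
    _ < #{y | c y = c u} := by
        refine card_lt_card (ssubset_iff_of_subset ?_ |>.2 ⟨x, ?_, ?_⟩)
        · exact filter_subset_filter _ (subset_univ _)
        · simpa using hxu
        · simp [hx]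

theorem mem_support_of_coloring [Fintype V] (hG : G.Preconnected) (hp : p.IsPath)
    (h : ∀ y ∉ p.support, ∃ c : G.Coloring Bool,
      c y = c u ∧ Fintype.card V = 2 * #{z | c z = c u})
    (y : V) : y ∈ p.support := by
  by_contra hy
  obtain ⟨c, hcy, hcard⟩ := h y hy
  have hcover : ∀ z, c z ≠ c u → z ∈ p.support := by
    intro z hz
    by_contra hzp
    obtain ⟨c', hc'z, -⟩ := h z hzp
    exact hz ((coloring_bool_eq_iff_eq hG c c' z u).2 hc'z)
  have hlt := card_filter_coloring_lt c hp hcover hy hcy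
  have := card_filter_add_card_filter_not (s := univ) (fun z => c z = c u)
  rw [card_univ] at this
  simp only [ne_eq] at hlt
  omega

end Bipartite

section Counting

variable {V : Type*} [Fintype V] {G : SimpleGraph V} [DecidableRel G.Adj] {J : Finset V}

theorem eq_mul_and_eq_of_add_le_mul {K d D e : ℝ} (hK : 0 < K) (hd : 0 < d) (hdD : d ≤ D)
    (h : e ^ 2 / (2 * K) + K * D ^ 3 / (2 * d) ≤ D * e) : e = K * D ∧ D = d := by
  have hD : 0 < D := hd.trans_le hdD
  -- The gap in `D * e ≤ e ^ 2 / (2 * K) + K * D ^ 2 / 2 ≤ e ^ 2 / (2 * K) + K * D ^ 3 / (2 * d)`.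
  have hsplit : e ^ 2 / (2 * K) + K * D ^ 3 / (2 * d) - D * e =
      (e - K * D) ^ 2 / (2 * K) + K * D ^ 2 * (D - d) / (2 * d) := by
    field_simp
    ring
  have hsq : 0 ≤ (e - K * D) ^ 2 / (2 * K) := by positivity
  have hcub : 0 ≤ K * D ^ 2 * (D - d) / (2 * d) := by
    have := sub_nonneg.2 hdD
    positivity
  have hsq0 : (e - K * D) ^ 2 / (2 * K) = 0 := by linarith
  have hcub0 : K * D ^ 2 * (D - d) / (2 * d) = 0 := by linarith
  constructor
  · simpa [hK.ne', sub_eq_zero] using hsq0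
  · simpa [hK.ne', hD.ne', hd.ne', sub_eq_zero] using hcub0

theorem card_eq_two_mul_card_of_isRegularOfDegree {d : ℕ} (hreg : G.IsRegularOfDegree d)
    (hd : 0 < d) (he : #G.edgeFinset = #J * d) : Fintype.card V = 2 * #J := by
  have hsum := G.sum_degrees_eq_twice_card_edges
  simp only [hreg.degree_eq, sum_const, card_univ, smul_eq_mul, he, ← mul_assoc] at hsum
  exact Nat.eq_of_mul_eq_mul_right hd hsum

theorem card_biUnion_incidenceFinset [DecidableEq V] (hJ : G.IsIndepSet J) :
    #(J.biUnion fun u => G.incidenceFinset u) = ∑ u ∈ J, G.degree u := by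
  rw [card_biUnion]
  · simp only [card_incidenceFinset_eq_degree]
  · intro u hu v hv huv
    refine disjoint_left.2 fun e heu hev => hJ hu hv huv ?_
    rw [mem_incidenceFinset] at heu hev
    exact G.adj_of_mem_incidenceSet huv heu hev

theorem sum_degree_le_card_edgeFinset (hJ : G.IsIndepSet J) :
    ∑ u ∈ J, G.degree u ≤ #G.edgeFinset := by
  classical
  rw [← card_biUnion_incidenceFinset hJ]
  exact card_le_card (biUnion_subset.2 fun u _ => G.incidenceFinset_subset u)

theorem isIndepSet_compl_of_card_edgeFinset_le (hJ : G.IsIndepSet J)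
    (hsum : #G.edgeFinset ≤ ∑ u ∈ J, G.degree u) : G.IsIndepSet (↑J : Set V)ᶜ := by
  classical
  rw [← card_biUnion_incidenceFinset hJ] at hsum
  have hcover := eq_of_subset_of_card_le
    (biUnion_subset.2 fun u _ => G.incidenceFinset_subset u) hsum
  intro a ha b hb _ hab
  have hmem : s(a, b) ∈ G.edgeFinset := mem_edgeFinset.2 hab
  rw [← hcover, mem_biUnion] at hmem
  obtain ⟨u, hu, he⟩ := hmem
  rw [mem_incidenceFinset] at he
  rcases Sym2.mem_iff.1 he.2 with rfl | rfl
  exacts [ha hu, hb hu]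

theorem zagreb1_le_of_isIndepSet (hJ : G.IsIndepSet J) :
    zagreb1 G ≤ ((Fintype.card V : ℝ) - #J) * (G.maxDegree : ℝ) ^ 2
      + G.maxDegree * #G.edgeFinset := by
  classical
  have hcompl : ∑ u ∈ Jᶜ, (G.degree u : ℝ) ^ 2 ≤
      ((Fintype.card V : ℝ) - #J) * (G.maxDegree : ℝ) ^ 2 := by
    rw [← Nat.cast_sub J.card_le_univ, ← card_compl, ← nsmul_eq_mul]
    exact sum_le_card_nsmul _ _ _ fun u _ => by gcongr; exact G.degree_le_maxDegree u
  have hindep : ∑ u ∈ J, (G.degree u : ℝ) ^ 2 ≤ G.maxDegree * #G.edgeFinset := calc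
    _ ≤ ∑ u ∈ J, (G.maxDegree : ℝ) * G.degree u :=
      sum_le_sum fun u _ => by rw [sq]; gcongr; exact G.degree_le_maxDegree u
    _ = G.maxDegree * ((∑ u ∈ J, G.degree u : ℕ) : ℝ) := by rw [← mul_sum, Nat.cast_sum]
    _ ≤ G.maxDegree * #G.edgeFinset := by gcongr; exact sum_degree_le_card_edgeFinset hJ
  rw [zagreb1, ← sum_add_sum_compl J]
  linarith

theorem isRegularOfDegree_maxDegree_of_le_zagreb1 (hJ : G.IsIndepSet J) (hJne : J.Nonempty)
    (hδ : 0 < G.minDegree)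
    (h : ((Fintype.card V : ℝ) - #J) * (G.maxDegree : ℝ) ^ 2 + (#G.edgeFinset : ℝ) ^ 2 / (2 * #J)
      + #J * (G.maxDegree : ℝ) ^ 3 / (2 * G.minDegree) ≤ zagreb1 G) :
    G.IsRegularOfDegree G.maxDegree ∧ #G.edgeFinset = #J * G.maxDegree := by
  have : Nonempty V := hJne.to_type
  have hle : G.minDegree ≤ G.maxDegree := G.minDegree_le_maxDegree
  have hZ := zagreb1_le_of_isIndepSet hJ
  obtain ⟨he, hΔ⟩ := eq_mul_and_eq_of_add_le_mul (K := #J) (d := G.minDegree) (D := G.maxDegree)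
    (e := #G.edgeFinset) (mod_cast hJne.card_pos) (mod_cast hδ) (mod_cast hle) (by linarith)
  have hΔδ : G.maxDegree = G.minDegree := mod_cast hΔ
  exact ⟨fun u => (G.degree_le_maxDegree u).antisymm (hΔδ ▸ G.minDegree_le_degree u),
    mod_cast he⟩

theorem exists_coloring_of_le_zagreb1 (hJ : G.IsIndepSet J) (hJne : J.Nonempty)
    (hδ : 0 < G.minDegree)
    (h : ((Fintype.card V : ℝ) - #J) * (G.maxDegree : ℝ) ^ 2 + (#G.edgeFinset : ℝ) ^ 2 / (2 * #J)
      + #J * (G.maxDegree : ℝ) ^ 3 / (2 * G.minDegree) ≤ zagreb1 G) :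
    ∃ c : G.Coloring Bool, (∀ y ∈ J, c y = true) ∧ Fintype.card V = 2 * #{y | c y = true} := by
  obtain ⟨hreg, he⟩ := isRegularOfDegree_maxDegree_of_le_zagreb1 hJ hJne hδ h
  obtain ⟨y, -⟩ := hJne
  have hΔ : 0 < G.maxDegree :=
    hδ.trans_le ((G.minDegree_le_degree y).trans (G.degree_le_maxDegree y))
  have hJc : G.IsIndepSet (↑J : Set V)ᶜ :=
    isIndepSet_compl_of_card_edgeFinset_le hJ (by simp [hreg.degree_eq, he])
  obtain ⟨c, hc⟩ := exists_coloring_bool_of_isIndepSet hJ hJc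
  have hfilter : ({y | c y = true} : Finset V) = J := by ext; simp [hc]
  exact ⟨c, fun y hy => (hc y).2 hy,
    hfilter.symm ▸ card_eq_two_mul_card_of_isRegularOfDegree hreg hΔ he⟩

end Counting

theorem stmt11_general {V : Type*} [Fintype V] [DecidableEq V] (G : SimpleGraph V)
    [DecidableRel G.Adj] (k : ℕ) (hk : 1 ≤ k) (hconn : IsKConnected G k)
    (h : zagreb1 G ≥ ((Fintype.card V : ℝ) - k - 2) * (G.maxDegree : ℝ) ^ 2
        + (G.edgeFinset.card : ℝ) ^ 2 / (2 * ((k : ℝ) + 2))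
        + ((k : ℝ) + 2) * (G.maxDegree : ℝ) ^ 3 / (2 * G.minDegree)) :
    IsTraceable G := by
  have : Nontrivial V := Fintype.one_lt_card_iff_nontrivial.1 (hk.trans_lt hconn.1)
  have hG : G.Preconnected := hconn.preconnected hk
  obtain ⟨u, v, p, hp, hmax⟩ := Walk.exists_isPath_forall_isPath_length_le_length G
  refine ⟨u, v, p, hp.isHamiltonian_of_mem (mem_support_of_coloring hG hp fun x hx => ?_)⟩
  obtain ⟨J, hJcard, hxJ, huJ, hJ⟩ := hconn.exists_isIndepSet_card_eq ⟨hp, hmax⟩ hx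
  obtain ⟨c, hcJ, hcard⟩ :=
    exists_coloring_of_le_zagreb1 hJ ⟨x, hxJ⟩ hG.minDegree_pos_of_nontrivial
      (by rw [hJcard]; push_cast; rwa [← sub_sub])
  exact ⟨c, (hcJ x hxJ).trans (hcJ u huJ).symm, by rwa [hcJ u huJ]⟩

/-- If `G` is a `k`-connected (`k ≥ 1`) graph with `n ≥ 9` vertices, `e` edges, minimum
degree `δ`, and maximum degree `Δ`, and `Z₁(G) ≥ (n − k − 2)Δ² + e²/(2(k+2)) + (k+2)Δ³/(2δ)`,
then `G` is traceable. -/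
theorem stmt11 {V : Type*} [Fintype V] [DecidableEq V] (G : SimpleGraph V) [DecidableRel G.Adj]
    (k : ℕ) (hk : 1 ≤ k) (hconn : IsKConnected G k) (hn : 9 ≤ Fintype.card V)
    (h : zagreb1 G ≥ ((Fintype.card V : ℝ) - k - 2) * (G.maxDegree : ℝ) ^ 2
        + (G.edgeFinset.card : ℝ) ^ 2 / (2 * ((k : ℝ) + 2))
        + ((k : ℝ) + 2) * (G.maxDegree : ℝ) ^ 3 / (2 * G.minDegree)) :
    IsTraceable G := by
  exact stmt11_general G k hk hconn h
end
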